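/- Fix r > 1 and let A : [1,∞) → ℂ be continuously differentiable with ∫_1^∞ |A(x)|² dx < ∞ and ∫_1^∞ |A'(x)| dx < ∞. Then the function K(s) = ∫_{max(s^{1/r},1)}^∞ A(x)·e^{ix}·x^{-r} dx (well defined as a Lebesgue integral, since A ∈ L² and x^{-r} ∈ L² on [1,∞)) is absolutely integrable on [1,∞): ∫_1^∞ |K(s)| ds < ∞. -/

import Mathlib

open MeasureTheory Filter Topology Complex

/-- Averaging the weighted tails of an integrable function: by Fubini, each `x` is counted with
weight at most `x ^ (-r) * x ^ r = 1`. -/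
lemma integrableOn_weighted_tail {r : ℝ} (hr : 0 < r) {g : ℝ → ℂ}
    (hg : IntegrableOn g (Set.Ioi 1)) :
    IntegrableOn (fun s : ℝ => ∫ x in Set.Ioi (s ^ (1 / r)), g x * ((x ^ (-r) : ℝ) : ℂ))
      (Set.Ioi 1) := by
  set μ : Measure ℝ := volume.restrict (Set.Ioi 1) with hμ
  set S : Set (ℝ × ℝ) := {p | p.1 ^ (1 / r) < p.2} with hS
  have hSm : MeasurableSet S :=
    measurableSet_lt (measurable_fst.pow_const _) measurable_snd
  set F : ℝ × ℝ → ℂ := S.indicator (fun p => g p.2 * ((p.2 ^ (-r) : ℝ) : ℂ)) with hF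
  have hw : Measurable (fun x : ℝ => ((x ^ (-r) : ℝ) : ℂ)) :=
    measurable_ofReal.comp (measurable_id.pow_const _)
  have hFm : AEStronglyMeasurable F (μ.prod μ) := by
    refine AEStronglyMeasurable.indicator ?_ hSm
    exact (hg.aestronglyMeasurable.mul hw.aestronglyMeasurable).comp_snd
  have hsec : ∀ x ∈ Set.Ioi (1 : ℝ), ∀ s ∈ Set.Ioi (1 : ℝ), F (s, x) =
      (Set.Ioo 1 (x ^ r)).indicator (fun _ => g x * ((x ^ (-r) : ℝ) : ℂ)) s := by
    intro x hx s hs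
    have hx0 : (0 : ℝ) < x := zero_lt_one.trans hx
    have hs0 : (0 : ℝ) < s := zero_lt_one.trans hs
    have key : s ^ (1 / r) < x ↔ s < x ^ r := by
      rw [one_div, Real.rpow_inv_lt_iff_of_pos hs0.le hx0.le hr]
    by_cases h : s < x ^ r
    · rw [hF, Set.indicator_of_mem (show (s, x) ∈ S from key.2 h),
        Set.indicator_of_mem (show s ∈ Set.Ioo 1 (x ^ r) from ⟨hs, h⟩)]
    · rw [hF, Set.indicator_of_notMem (show (s, x) ∉ S from fun h' => h (key.1 h')),
        Set.indicator_of_notMem (fun h' => h h'.2)]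
  have hFi : Integrable F (μ.prod μ) := by
    rw [integrable_prod_iff' hFm]
    constructor
    · filter_upwards [ae_restrict_mem measurableSet_Ioi] with x hx
      have : Integrable ((Set.Ioo 1 (x ^ r)).indicator
          (fun _ => g x * ((x ^ (-r) : ℝ) : ℂ))) μ := by
        refine Integrable.mono_measure ?_ Measure.restrict_le_self
        rw [integrable_indicator_iff measurableSet_Ioo]
        exact integrableOn_const (by simp)
      refine this.congr ?_
      filter_upwards [ae_restrict_mem measurableSet_Ioi] with s hs
      exact (hsec x hx s hs).symm
    · refine Integrable.mono' hg.norm hFm.norm.prod_swap.integral_prod_right' ?_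
      filter_upwards [ae_restrict_mem measurableSet_Ioi] with x hx
      have hx0 : (0 : ℝ) < x := zero_lt_one.trans hx
      have hx1 : 1 ≤ x ^ r := Real.one_le_rpow (le_of_lt hx) hr.le
      have : ∫ s, ‖F (s, x)‖ ∂μ = (x ^ r - 1) * ‖g x * ((x ^ (-r) : ℝ) : ℂ)‖ := by
        have h1 : ∫ s, ‖F (s, x)‖ ∂μ = ∫ s in Set.Ioi 1,
            (Set.Ioo 1 (x ^ r)).indicator (fun _ => ‖g x * ((x ^ (-r) : ℝ) : ℂ)‖) s := by
          refine setIntegral_congr_fun measurableSet_Ioi fun s hs => ?_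
          simp only [hsec x hx s hs, norm_indicator_eq_indicator_norm]
        rw [h1, setIntegral_indicator measurableSet_Ioo,
          Set.inter_eq_self_of_subset_right Set.Ioo_subset_Ioi_self, setIntegral_const]
        simp [Measure.real, ENNReal.toReal_ofReal (sub_nonneg.2 hx1)]
      rw [this, Real.norm_of_nonneg (mul_nonneg (sub_nonneg.2 hx1) (norm_nonneg _)), norm_mul,
        norm_real, Real.norm_of_nonneg (Real.rpow_nonneg hx0.le _), Real.rpow_neg hx0.le]
      have hxr : 0 < x ^ r := Real.rpow_pos_of_pos hx0 r
      calc (x ^ r - 1) * (‖g x‖ * (x ^ r)⁻¹)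
          ≤ x ^ r * (‖g x‖ * (x ^ r)⁻¹) := by gcongr; linarith
        _ = ‖g x‖ := by field_simp
  refine hFi.integral_prod_left.congr ?_
  filter_upwards [ae_restrict_mem measurableSet_Ioi] with s hs
  have hs1 : 1 ≤ s ^ (1 / r) := Real.one_le_rpow (le_of_lt hs) (by positivity)
  have h2 : (fun x => F (s, x)) =
      (Set.Ioi (s ^ (1 / r))).indicator (fun x => g x * ((x ^ (-r) : ℝ) : ℂ)) := by
    ext x
    simp [hF, hS, Set.indicator]
  rw [h2, hμ, setIntegral_indicator measurableSet_Ioi,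
    Set.inter_eq_self_of_subset_right (Set.Ioi_subset_Ioi hs1)]

/-- The substitution `x = s ^ (1 / r)` preserves integrability of `f x dx / x` on `(1, ∞)`. -/
lemma integrableOn_comp_rpow_mul_inv {r : ℝ} (hr : 0 < r) {f : ℝ → ℂ}
    (hf : IntegrableOn (fun x => f x * ((x⁻¹ : ℝ) : ℂ)) (Set.Ioi 1)) :
    IntegrableOn (fun s : ℝ => f (s ^ (1 / r)) * ((s⁻¹ : ℝ) : ℂ)) (Set.Ioi 1) := by
  have hp : (1 / r) ≠ 0 := by positivity
  have h0 : IntegrableOn ((Set.Ioi 1).indicator fun x => f x * ((x⁻¹ : ℝ) : ℂ)) (Set.Ioi 0) :=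
    ((integrable_indicator_iff measurableSet_Ioi).2 hf).integrableOn
  have h1 := ((integrableOn_Ioi_comp_rpow_iff _ hp).2 h0).mono_set
    (Set.Ioi_subset_Ioi zero_le_one)
  refine IntegrableOn.congr_fun (h1.const_mul (r : ℂ)) (fun s hs => ?_) measurableSet_Ioi
  have hs0 : (0 : ℝ) < s := zero_lt_one.trans hs
  have hs1 : 1 < s ^ (1 / r) := Real.one_lt_rpow hs (by positivity)
  have hc : r * (|1 / r| * s ^ (1 / r - 1)) * (s ^ (1 / r))⁻¹ = s⁻¹ := by
    have := Real.rpow_pos_of_pos hs0 (1 / r)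
    rw [abs_of_pos (by positivity), Real.rpow_sub_one hs0.ne']
    field_simp
  simp only [Set.indicator_of_mem (show s ^ (1 / r) ∈ Set.Ioi (1 : ℝ) from hs1), real_smul]
  rw [← hc]
  push_cast
  ring

/-- A square-integrable function on `(1, ∞)` is integrable against `dx / x`. -/
lemma integrableOn_mul_inv_of_sq {f : ℝ → ℂ} (hm : ContinuousOn f (Set.Ioi 1))
    (hf : IntegrableOn (fun x => ‖f x‖ ^ 2) (Set.Ioi 1)) :
    IntegrableOn (fun x => f x * ((x⁻¹ : ℝ) : ℂ)) (Set.Ioi 1) := by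
  have h2 : IntegrableOn (fun x : ℝ => x ^ (-2 : ℝ)) (Set.Ioi 1) :=
    integrableOn_Ioi_rpow_of_lt (by norm_num) one_pos
  refine Integrable.mono' (hf.add h2) ((hm.aestronglyMeasurable measurableSet_Ioi).mul
    (measurable_ofReal.comp measurable_inv).aestronglyMeasurable) ?_
  filter_upwards [ae_restrict_mem measurableSet_Ioi] with x hx
  have hx0 : (0 : ℝ) < x := zero_lt_one.trans hx
  have h3 : x ^ (-2 : ℝ) = x⁻¹ ^ 2 := by
    rw [Real.rpow_neg hx0.le, inv_pow]
    norm_num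
  rw [norm_mul, norm_real, Real.norm_of_nonneg (by positivity)]
  simp only [Pi.add_apply, h3]
  nlinarith [sq_nonneg (‖f x‖ - x⁻¹), sq_nonneg (‖f x‖), sq_nonneg x⁻¹]

/-- Multiplying by a weight that is at most one on `(1, ∞)` keeps integrability. -/
lemma integrableOn_mul_rpow_of_nonpos {p : ℝ} (hp : p ≤ 0) {f : ℝ → ℂ}
    (hf : IntegrableOn f (Set.Ioi 1)) :
    IntegrableOn (fun x => f x * ((x ^ p : ℝ) : ℂ)) (Set.Ioi 1) := by
  refine Integrable.mono hf (hf.aestronglyMeasurable.mul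
    (measurable_ofReal.comp (measurable_id.pow_const _)).aestronglyMeasurable) ?_
  filter_upwards [ae_restrict_mem measurableSet_Ioi] with x hx
  have hx0 : (0 : ℝ) < x := zero_lt_one.trans hx
  rw [norm_mul, norm_real, Real.norm_of_nonneg (Real.rpow_nonneg hx0.le _)]
  exact mul_le_of_le_one_right (norm_nonneg _)
    (Real.rpow_le_one_of_one_le_of_nonpos (le_of_lt hx) hp)

/-- Multiplying by the unimodular factor `e^{ix}` keeps integrability. -/
lemma integrableOn_mul_exp_I {f : ℝ → ℂ} {s : Set ℝ} (hf : IntegrableOn f s) :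
    IntegrableOn (fun x => f x * exp (I * (x : ℂ))) s := by
  refine Integrable.mono hf (hf.aestronglyMeasurable.mul
    (by fun_prop : Continuous fun x : ℝ => exp (I * (x : ℂ))).aestronglyMeasurable) ?_
  refine Eventually.of_forall fun x => ?_
  rw [norm_mul, mul_comm I, norm_exp_ofReal_mul_I, mul_one]

/-- Integration by parts against `e^{ix}` on `(a, ∞)`. -/
lemma integral_Ioi_mul_exp_I_mul_rpow {r a : ℝ} (hr : 1 ≤ r) (ha : 1 ≤ a) {A A' : ℝ → ℂ}
    (hderiv : ∀ x ∈ Set.Ici (1 : ℝ), HasDerivAt A (A' x) x)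
    (hA : IntegrableOn (fun x => A x * ((x⁻¹ : ℝ) : ℂ)) (Set.Ioi 1))
    (hA' : IntegrableOn A' (Set.Ioi 1)) :
    ∫ x in Set.Ioi a, A x * exp (I * (x : ℂ)) * ((x ^ (-r) : ℝ) : ℂ) =
      I * (A a * exp (I * (a : ℂ)) * ((a ^ (-r) : ℝ) : ℂ) +
        ∫ x in Set.Ioi a, (A' x - r * (A x * ((x⁻¹ : ℝ) : ℂ))) * exp (I * (x : ℂ)) *
          ((x ^ (-r) : ℝ) : ℂ)) := by
  set u : ℝ → ℂ := fun x => A x * exp (I * (x : ℂ)) * ((x ^ (-r) : ℝ) : ℂ) with hu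
  set v : ℝ → ℂ := fun x => (A' x - r * (A x * ((x⁻¹ : ℝ) : ℂ))) * exp (I * (x : ℂ)) *
    ((x ^ (-r) : ℝ) : ℂ) with hv
  have hsub : Set.Ioi a ⊆ Set.Ioi 1 := Set.Ioi_subset_Ioi ha
  have hui : IntegrableOn u (Set.Ioi a) := by
    refine IntegrableOn.mono_set ?_ hsub
    refine IntegrableOn.congr_fun (integrableOn_mul_rpow_of_nonpos (p := 1 - r) (by linarith)
      (integrableOn_mul_exp_I hA)) (fun x hx => ?_) measurableSet_Ioi
    have hx0 : (0 : ℝ) < x := zero_lt_one.trans hx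
    have h1 : x ^ (-r) = x⁻¹ * x ^ (1 - r) := by
      rw [sub_eq_add_neg, Real.rpow_add hx0, Real.rpow_one]
      field_simp
    simp only [hu, h1]
    push_cast
    ring
  have hvi : IntegrableOn v (Set.Ioi a) := by
    refine IntegrableOn.mono_set ?_ hsub
    exact integrableOn_mul_rpow_of_nonpos (by linarith)
      (integrableOn_mul_exp_I (hA'.sub (hA.const_mul (r : ℂ))))
  have hd : ∀ x ∈ Set.Ici a, HasDerivAt u (v x + I * u x) x := by
    intro x hx
    have hx1 : 1 ≤ x := ha.trans hx
    have hx0 : (0 : ℝ) < x := zero_lt_one.trans_le hx1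
    have he : HasDerivAt (fun x : ℝ => exp (I * (x : ℂ))) (exp (I * (x : ℂ)) * (I * 1)) x :=
      (((hasDerivAt_id x).ofReal_comp).const_mul I).cexp
    have hw : HasDerivAt (fun x : ℝ => ((x ^ (-r) : ℝ) : ℂ)) ((-r * x ^ (-r - 1) : ℝ) : ℂ) x :=
      (Real.hasDerivAt_rpow_const (Or.inl hx0.ne')).ofReal_comp
    refine (((hderiv x hx1).mul he).mul hw).congr_deriv ?_
    simp only [hu, hv, Real.rpow_sub_one hx0.ne', div_eq_mul_inv, Pi.mul_apply]
    push_cast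
    ring
  have hIu : IntegrableOn (fun x => I * u x) (Set.Ioi a) := hui.const_mul I
  have hdi : IntegrableOn (fun x => v x + I * u x) (Set.Ioi a) := hvi.add hIu
  have ht : Tendsto u atTop (𝓝 0) := tendsto_zero_of_hasDerivAt_of_integrableOn_Ioi
    (fun x hx => hd x (Set.Ioi_subset_Ici_self hx)) hdi hui
  have h := integral_Ioi_of_hasDerivAt_of_tendsto' hd hdi ht
  rw [integral_add hvi hIu, integral_const_mul] at h
  change ∫ x in Set.Ioi a, u x = I * (u a + ∫ x in Set.Ioi a, v x)
  linear_combination (-I) * h + (∫ x in Set.Ioi a, u x) * I_mul_I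

/-- Fix `r > 1` and let `A` be continuously differentiable on `[1,∞)`
with `∫_1^∞ |A|² < ∞` and `∫_1^∞ |A'| < ∞`. Then
`K(s) = ∫_{max(s^{1/r},1)}^∞ A(x) e^{ix} x^{-r} dx` is absolutely integrable on `[1,∞)`. -/
theorem stmt16 (r : ℝ) (hr : 1 < r)
    (A A' : ℝ → ℂ)
    (hderiv : ∀ x ∈ Set.Ici (1 : ℝ), HasDerivAt A (A' x) x)
    (hcont : ContinuousOn A' (Set.Ici (1 : ℝ)))
    (hA2 : IntegrableOn (fun x => ‖A x‖ ^ 2) (Set.Ici (1 : ℝ)) volume)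
    (hA' : IntegrableOn A' (Set.Ici (1 : ℝ)) volume) :
    IntegrableOn
      (fun s => ∫ x in Set.Ioi (max (s ^ (1 / r)) 1),
        A x * Complex.exp (Complex.I * (x : ℂ)) * ((x ^ (-r) : ℝ) : ℂ))
      (Set.Ici (1 : ℝ)) volume := by
  have hr0 : 0 < r := zero_lt_one.trans hr
  rw [integrableOn_Ici_iff_integrableOn_Ioi] at hA2 hA' ⊢
  have hAc : ContinuousOn A (Set.Ioi 1) := fun x hx =>
    (hderiv x (Set.Ioi_subset_Ici_self hx)).continuousAt.continuousWithinAt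
  have hA := integrableOn_mul_inv_of_sq hAc hA2
  have hboundary := integrableOn_comp_rpow_mul_inv hr0
    (f := fun x => A x * exp (I * (x : ℂ)))
    ((integrableOn_mul_exp_I hA).congr_fun (fun x _ => by ring) measurableSet_Ioi)
  have htail := integrableOn_weighted_tail hr0
    (integrableOn_mul_exp_I (hA'.sub (hA.const_mul (r : ℂ))))
  refine IntegrableOn.congr_fun ((hboundary.add htail).const_mul I) (fun s hs => ?_)
    measurableSet_Ioi
  have hs0 : (0 : ℝ) < s := zero_lt_one.trans hs
  have hs1 : 1 ≤ s ^ (1 / r) := Real.one_le_rpow (le_of_lt hs) (by positivity)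
  have hpow : (s ^ (1 / r)) ^ (-r) = s⁻¹ := by
    rw [← Real.rpow_mul hs0.le, show 1 / r * -r = -1 by field_simp, Real.rpow_neg_one]
  simp only [max_eq_left hs1]
  rw [integral_Ioi_mul_exp_I_mul_rpow hr.le hs1 hderiv hA hA', hpow]
  rfl
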